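/- arXiv:2012.08942 — 2 statements merged into one kernel-verified Lean document; each statement's English description precedes it below -/
import Mathlib

section
/- Let H and K be separable complex Hilbert spaces, (Λ, μ) a σ-finite measure space, and T : H → L²(Λ, μ; K) a continuous linear map with dense range. Suppose T is pointwise defined, i.e. there is a family (T_λ)_{λ∈Λ} of continuous linear maps T_λ : H → K such that for every v ∈ H one has (T v)(λ) = T_λ(v) for μ-almost every λ ∈ Λ. Then for μ-almost every λ ∈ Λ the map T_λ : H → K has dense range. -/
open MeasureTheory

/-- **Lemma 2(1)** (constant-fiber form of Bernstein, Lemma 1.3):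
If a pointwise defined continuous linear map `T : H → L²(Λ, μ; K)` has dense range,
then μ-almost every fiber map `T_λ : H → K` has dense range. -/
theorem denseRange_fiber_of_denseRange_pointwiseDefined
    {H : Type*} [NormedAddCommGroup H] [InnerProductSpace ℂ H] [CompleteSpace H]
    [TopologicalSpace.SeparableSpace H]
    {K : Type*} [NormedAddCommGroup K] [InnerProductSpace ℂ K] [CompleteSpace K]
    [TopologicalSpace.SeparableSpace K]
    {Λ : Type*} [MeasurableSpace Λ] {μ : Measure Λ} [SigmaFinite μ]
    (T : H →L[ℂ] Lp K 2 μ) (hT : DenseRange T)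
    (Tfib : Λ → (H →L[ℂ] K))
    (hpt : ∀ v : H, ∀ᵐ l ∂μ, (T v : Λ → K) l = Tfib l v) :
    ∀ᵐ l ∂μ, DenseRange (Tfib l) := by
  have key : ∀ (n : ℕ) (k : K), ∀ᵐ l ∂μ, l ∈ spanningSets μ n →
      k ∈ closure (Set.range (Tfib l)) := by
    intro n k
    let f : Lp K 2 μ := indicatorConstLp 2 (measurableSet_spanningSets μ n)
      (measure_spanningSets_lt_top μ n).ne k
    obtain ⟨u, hu, hlim⟩ := mem_closure_iff_seq_limit.1 (hT f)
    choose v hv using hu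
    obtain ⟨ns, _, hns⟩ := (tendstoInMeasure_of_tendsto_Lp hlim).exists_seq_tendsto_ae
    have hall : ∀ᵐ l ∂μ, ∀ j, (T (v j) : Λ → K) l = Tfib l (v j) :=
      ae_all_iff.2 fun j => hpt (v j)
    have hf : (f : Λ → K) =ᵐ[μ] (spanningSets μ n).indicator fun _ => k :=
      indicatorConstLp_coeFn
    filter_upwards [hns, hall, hf] with l h1 h2 h3 hl
    rw [h3, Set.indicator_of_mem hl] at h1
    refine mem_closure_of_tendsto h1 (Filter.Eventually.of_forall fun j => ?_)
    exact ⟨v (ns j), by rw [← h2, hv]⟩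
  have hall : ∀ᵐ l ∂μ, ∀ n m, l ∈ spanningSets μ n →
      TopologicalSpace.denseSeq K m ∈ closure (Set.range (Tfib l)) :=
    ae_all_iff.2 fun n => ae_all_iff.2 fun m => key n _
  filter_upwards [hall] with l hl
  obtain ⟨n, hn⟩ : ∃ n, l ∈ spanningSets μ n := by
    rw [← Set.mem_iUnion, iUnion_spanningSets μ]
    exact Set.mem_univ l
  have hd : Dense (closure (Set.range (Tfib l))) :=
    (TopologicalSpace.denseRange_denseSeq K).mono (by
      rintro _ ⟨m, rfl⟩
      exact hl n m hn)
  exact dense_closure.1 hd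
end

section
/- Let H and K be separable complex Hilbert spaces, (Λ, μ) a σ-finite measure space, and T : H → L²(Λ, μ; K) a continuous linear map that is Hilbert–Schmidt, i.e. there exists a Hilbert basis (e_i)_{i∈I} of H with Σ_{i∈I} ‖T e_i‖² < ∞. Then T is pointwise defined: there exists a family (T_λ)_{λ∈Λ} of continuous linear maps T_λ : H → K such that for every v ∈ H, (T v)(λ) = T_λ(v) for μ-almost every λ ∈ Λ. -/
open MeasureTheory

theorem hilbertBasis_countable_aux
    {H : Type*} [NormedAddCommGroup H] [InnerProductSpace ℂ H]
    [TopologicalSpace.SeparableSpace H] {ι : Type*} (e : HilbertBasis ι ℂ H) : Countable ι := by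
  have hd : Pairwise (Function.onFun Disjoint fun i : ι => Metric.ball (e i) (1 / 2)) := by
    intro i j hij
    refine Metric.ball_disjoint_ball ?_
    have h0 : inner ℂ (e i) (e j) = 0 := e.orthonormal.2 hij
    have h1 : ‖e i - e j‖ ^ 2 = 2 := by
      rw [@norm_sub_sq ℂ, h0, e.orthonormal.1 i, e.orthonormal.1 j]
      norm_num
    rw [dist_eq_norm]
    nlinarith [norm_nonneg (e i - e j)]
  exact hd.countable_of_isOpen_disjoint (fun i => Metric.isOpen_ball)
    (fun i => ⟨e i, Metric.mem_ball_self (by norm_num)⟩)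

theorem summable_coeff_aux
    {H : Type*} [NormedAddCommGroup H] [InnerProductSpace ℂ H]
    {K : Type*} [NormedAddCommGroup K] [NormedSpace ℂ K]
    {ι : Type*} (e : HilbertBasis ι ℂ H) (a : ι → K)
    (ha : Summable fun i => ‖a i‖ ^ 2) (v : H) :
    Summable fun i => ‖inner ℂ (e i) v • a i‖ := by
  have hs : Summable fun i => ‖inner ℂ (e i) v‖ ^ 2 := e.orthonormal.inner_products_summable v
  refine Summable.of_nonneg_of_le (fun i => norm_nonneg _) (fun i => ?_) (hs.add ha)
  rw [norm_smul]
  nlinarith [sq_nonneg (‖inner ℂ (e i) v‖ - ‖a i‖), sq_nonneg ‖inner ℂ (e i) v‖, sq_nonneg ‖a i‖]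

theorem exists_fiber_aux
    {H : Type*} [NormedAddCommGroup H] [InnerProductSpace ℂ H] [CompleteSpace H]
    {K : Type*} [NormedAddCommGroup K] [InnerProductSpace ℂ K] [CompleteSpace K]
    {ι : Type*} [Countable ι] (e : HilbertBasis ι ℂ H) (a : ι → K)
    (ha : Summable fun i => ‖a i‖ ^ 2) :
    ∃ S : H →L[ℂ] K, ∀ v, HasSum (fun i => inner ℂ (e i) v • a i) (S v) := by
  have hs : ∀ v, HasSum (fun i => inner ℂ (e i) v • a i) (∑' i, inner ℂ (e i) v • a i) :=
    fun v => (summable_coeff_aux e a ha v).of_norm.hasSum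
  let g : Finset ι → (H →L[ℂ] K) := fun s => ∑ i ∈ s, (innerSL ℂ (e i)).smulRight (a i)
  have hg : Filter.Tendsto (fun s x => g s x) Filter.atTop
      (nhds (fun v => ∑' i, inner ℂ (e i) v • a i)) := by
    rw [tendsto_pi_nhds]
    intro v
    have := hs v
    simpa [g, HasSum, sum_apply] using this
  exact ⟨continuousLinearMapOfTendsto g hg, hs⟩

/-- **Gelfand–Kostyuchenko theorem** (constant-fiber case, Theorem 1 of the paper):
every Hilbert–Schmidt operator `T : H → L²(Λ, μ; K)` is pointwise defined, i.e. there is a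
family of continuous linear maps `T_λ : H → K` with `(T v)(λ) = T_λ(v)` for a.e. `λ`. -/
theorem pointwiseDefined_of_hilbertSchmidt
    {H : Type*} [NormedAddCommGroup H] [InnerProductSpace ℂ H] [CompleteSpace H]
    [TopologicalSpace.SeparableSpace H]
    {K : Type*} [NormedAddCommGroup K] [InnerProductSpace ℂ K] [CompleteSpace K]
    [TopologicalSpace.SeparableSpace K]
    {Λ : Type*} [MeasurableSpace Λ] {μ : Measure Λ} [SigmaFinite μ]
    (T : H →L[ℂ] Lp K 2 μ)
    (hHS : ∃ (ι : Type) (e : HilbertBasis ι ℂ H), Summable fun i => ‖T (e i)‖ ^ 2) :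
    ∃ Tfib : Λ → (H →L[ℂ] K), ∀ v : H, ∀ᵐ l ∂μ, (T v : Λ → K) l = Tfib l v := by
  obtain ⟨ι, e, he⟩ := hHS
  have : Countable ι := hilbertBasis_countable_aux e
  have hnorm : ∀ i, ∫⁻ l, ‖(T (e i) : Λ → K) l‖ₑ ^ 2 ∂μ = ‖T (e i)‖ₑ ^ 2 := by
    intro i
    rw [Lp.enorm_def, eLpNorm_eq_lintegral_rpow_enorm_toReal two_ne_zero ENNReal.ofNat_ne_top,
      ← ENNReal.rpow_two, ← ENNReal.rpow_mul]
    simp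
  have hae : ∀ᵐ l ∂μ, Summable fun i => ‖(T (e i) : Λ → K) l‖ ^ 2 := by
    have hm : ∀ i, AEMeasurable (fun l => ‖(T (e i) : Λ → K) l‖ₑ ^ 2) μ :=
      fun i => (Lp.aestronglyMeasurable (T (e i))).enorm.pow_const 2
    have hfin : ∫⁻ l, ∑' i, ‖(T (e i) : Λ → K) l‖ₑ ^ 2 ∂μ ≠ ⊤ := by
      rw [lintegral_tsum hm]
      simp_rw [hnorm]
      have := he.norm
      rw [← tsum_enorm_ne_top_iff_summable_norm] at this
      simpa [enorm_pow] using this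
    filter_upwards [ae_lt_top' (AEMeasurable.tsum hm) hfin] with l hl
    refine Summable.of_norm ?_
    rw [← tsum_enorm_ne_top_iff_summable_norm]
    simpa [enorm_pow] using hl.ne
  have hex : ∀ l, ∃ S : H →L[ℂ] K, (Summable fun i => ‖(T (e i) : Λ → K) l‖ ^ 2) →
      ∀ v, HasSum (fun i => inner ℂ (e i) v • (T (e i) : Λ → K) l) (S v) := by
    intro l
    by_cases h : Summable fun i => ‖(T (e i) : Λ → K) l‖ ^ 2
    · obtain ⟨S, hS⟩ := exists_fiber_aux e _ h
      exact ⟨S, fun _ => hS⟩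
    · exact ⟨0, fun h' => absurd h' h⟩
  choose S hS using hex
  refine ⟨S, fun v => ?_⟩
  have hTv : HasSum (fun i => inner ℂ (e i) v • T (e i)) (T v) := by
    have := (e.hasSum_repr v).mapL T
    simpa [e.repr_apply_apply] using this
  have hsum := summable_coeff_aux e (fun i => T (e i)) he v
  rw [← tsum_enorm_ne_top_iff_summable_norm] at hsum
  have h1 := Lp.hasSum_coeFn_tsum hsum
  rw [hTv.tsum_eq] at h1
  have h2 : ∀ᵐ l ∂μ, ∀ i, (inner ℂ (e i) v • T (e i) : Lp K 2 μ) l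
      = inner ℂ (e i) v • (T (e i) : Λ → K) l := by
    rw [ae_all_iff]
    intro i
    filter_upwards [Lp.coeFn_smul (inner ℂ (e i) v) (T (e i))] with l hl
    simpa using hl
  filter_upwards [hae, h1, h2] with l ha hl1 hl2
  simp only [hl2] at hl1
  exact hl1.unique (hS l ha v)
end
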